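/- Let (x,t) be a social choice mechanism on an unrestricted parallel utility domain 𝒰 with |A| ≥ 3 that is DSIC, deterministic, onto, IR and satisfies no subsidy, and for distinct a,b ∈ A define L(a,b) := {α ∈ ℝ^n : there exists u ∈ 𝒰 with p_{i,a} − p_{i,b} = α_i for all i and x(u) = a}. Then for all α, β ∈ ℝ^n and all ε^{(α)}, ε^{(β)} ∈ ℝ^n with strictly positive entries: if α − ε^{(α)} ∈ L(a,b) and β − ε^{(β)} ∈ L(b,c) (for pairwise distinct a,b,c), then α + β − (ε^{(α)} + ε^{(β)})/2 ∈ L(a,c). -/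

import Mathlib

/-!
Common framework: agents indexed by `I`, alternatives `A` (finite, nonempty).
A type of an agent is a family `u : A → ℝ → ℝ`, where `u a z` is the utility
when alternative `a` is selected and the agent pays `z`.
-/

noncomputable section

namespace NQLSC

/-- A type (utility family) of an agent. -/
abbrev Util (A : Type*) := A → ℝ → ℝ

variable {A I : Type*}

/-- (S1): each `u a` is continuous and strictly decreasing in the payment. -/
def S1 (u : Util A) : Prop := ∀ a, Continuous (u a) ∧ StrictAnti (u a)

/-- `min_{a'∈A} u_{a'}(0)`, the value of the worst alternative at zero payment. -/
def minVal [Fintype A] [Nonempty A] (u : Util A) : ℝ :=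
  Finset.univ.inf' Finset.univ_nonempty (fun a => u a 0)

/-- (S2): as the payment tends to `+∞`, the utility of every alternative drops
(strictly) below `min_{a'} u_{a'}(0)`; for strictly decreasing utilities this is
equivalent to the utility being below that value at some payment. -/
def S2 [Fintype A] [Nonempty A] (u : Util A) : Prop :=
  ∀ a, ∃ z : ℝ, u a z < minVal u

/-- The willingness to pay `p_a = u_a⁻¹(min_{a'} u_{a'}(0))` (under (S1),(S2) this
`sInf` is the unique payment at which `u a` attains `minVal u`). -/
def wtp [Fintype A] [Nonempty A] (u : Util A) (a : A) : ℝ :=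
  sInf {z : ℝ | u a z ≤ minVal u}

/-- A parallel type: (S1), (S2), and for all `a, b` with `v_a ≥ v_b` and all
`z ∈ [0, p_b]`, `u_a (z + (p_a − p_b)) = u_b z`. -/
def IsParallel [Fintype A] [Nonempty A] (u : Util A) : Prop :=
  S1 u ∧ S2 u ∧ ∀ a b : A, u b 0 ≤ u a 0 → ∀ z : ℝ, 0 ≤ z → z ≤ wtp u b →
    u a (z + (wtp u a - wtp u b)) = u b z

/-- Unrestricted willingness to pay: every nonnegative vector with a zero entry is
the willingness-to-pay vector of some type in the domain. -/
def UnrestrictedWTP [Fintype A] [Nonempty A] (U : Set (Util A)) : Prop :=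
  ∀ lam : A → ℝ, (∀ a, 0 ≤ lam a) → (∃ a, lam a = 0) →
    ∃ u ∈ U, ∀ a, wtp u a = lam a

/-- Dominant-strategy incentive compatibility of a (deterministic) mechanism `(x,t)`
on the domain `𝒰 = ∏ i, U i`. -/
def DSIC [DecidableEq I] (U : I → Set (Util A)) (x : (I → Util A) → A)
    (t : (I → Util A) → I → ℝ) : Prop :=
  ∀ uh : I → Util A, (∀ j, uh j ∈ U j) → ∀ i, ∀ ui ∈ U i,
    ui (x uh) (t uh i) ≤
      ui (x (Function.update uh i ui)) (t (Function.update uh i ui) i)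

/-- Individual rationality. -/
def IR [Fintype A] [Nonempty A] [DecidableEq I] (U : I → Set (Util A))
    (x : (I → Util A) → A) (t : (I → Util A) → I → ℝ) : Prop :=
  ∀ uh : I → Util A, (∀ j, uh j ∈ U j) → ∀ i, ∀ ui ∈ U i,
    minVal ui ≤ ui (x (Function.update uh i ui)) (t (Function.update uh i ui) i)

/-- No subsidy: the mechanism never makes positive transfers to an agent. -/
def NoSubsidy (U : I → Set (Util A)) (t : (I → Util A) → I → ℝ) : Prop :=
  ∀ u : I → Util A, (∀ j, u j ∈ U j) → ∀ i, 0 ≤ t u i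

/-- Ontoness of the choice rule on the given domain. -/
def OntoMech (U : I → Set (Util A)) (x : (I → Util A) → A) : Prop :=
  ∀ a, ∃ u : I → Util A, (∀ j, u j ∈ U j) ∧ x u = a

/-- The set `L(a,b)` of vectors of willingness-to-pay differences `p_{·,a} − p_{·,b}`
realizable by a profile in the domain at which `a` is selected. -/
def Lset [Fintype A] [Nonempty A] (U : I → Set (Util A)) (x : (I → Util A) → A)
    (a b : A) : Set (I → ℝ) :=
  {α | ∃ u : I → Util A, (∀ j, u j ∈ U j) ∧
        (∀ i, wtp (u i) a - wtp (u i) b = α i) ∧ x u = a}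

/-!
Idea. At nonnegative, individually rational payments a parallel type compares outcomes as a
quasilinear agent with valuation `wtp` does. Incentive compatibility therefore gives weak
monotonicity with respect to `wtp`, and changing reports one agent at a time turns this into
positive association of differences. Since the other alternatives can be made unattractive for
everybody, positive association has a pairwise form: if `a` is selected and its lead over `b` grows
for every agent, then `b` is not selected. For `α + β < γ` this is applied to a profile at which
the lead of `a` over `c` is `γ`, that of `a` over `b` exceeds `α`, and that of `b` over `c`
exceeds `β`.
-/

section Types

variable [Fintype A] [Nonempty A]

theorem minVal_le (u : Util A) (a : A) : minVal u ≤ u a 0 :=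
  Finset.inf'_le (fun a => u a 0) (Finset.mem_univ a)

theorem S1.apply_wtp {u : Util A} (h₁ : S1 u) (h₂ : S2 u) (a : A) :
    u a (wtp u a) = minVal u := by
  obtain ⟨hcont, hanti⟩ := h₁ a
  obtain ⟨z, hz⟩ := h₂ a
  obtain ⟨y, hy⟩ : minVal u ∈ Set.range (u a) :=
    mem_range_of_exists_le_of_exists_ge hcont ⟨z, hz.le⟩ ⟨0, minVal_le u a⟩
  have hleast : IsLeast {z : ℝ | u a z ≤ minVal u} y :=
    ⟨hy.le, fun w hw => hanti.le_iff_ge.1 (hw.trans_eq hy.symm)⟩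
  rw [wtp, hleast.csInf_eq, hy]

theorem S1.le_wtp_iff {u : Util A} (h₁ : S1 u) (h₂ : S2 u) {a : A} {z : ℝ} :
    z ≤ wtp u a ↔ minVal u ≤ u a z := by
  rw [← h₁.apply_wtp h₂ a, (h₁ a).2.le_iff_ge]

theorem IsParallel.apply_le_apply_iff {u : Util A} (hu : IsParallel u) {a b : A} {y z : ℝ}
    (hy₀ : 0 ≤ y) (hy : y ≤ wtp u a) (hz₀ : 0 ≤ z) (hz : z ≤ wtp u b) :
    u a y ≤ u b z ↔ wtp u a - y ≤ wtp u b - z := by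
  obtain ⟨h₁, -, hshift⟩ := hu
  rcases le_total (u a 0) (u b 0) with hab | hba
  · rw [← hshift b a hab y hy₀ hy, (h₁ b).2.le_iff_ge]
    constructor <;> intro h <;> linarith
  · rw [← hshift a b hba z hz₀ hz, (h₁ a).2.le_iff_ge]
    constructor <;> intro h <;> linarith

theorem IsParallel.wtp_sub_le_wtp_sub {u : Util A} (hu : IsParallel u) {a b : A} {y z : ℝ}
    (hy : 0 ≤ y) (hz : 0 ≤ z) (hIR : minVal u ≤ u b z) (hle : u a y ≤ u b z) :
    wtp u a - y ≤ wtp u b - z := by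
  have hzb : z ≤ wtp u b := (hu.1.le_wtp_iff hu.2.1).2 hIR
  rcases le_total y (wtp u a) with hya | hay
  · exact (hu.apply_le_apply_iff hy hya hz hzb).1 hle
  · exact (sub_nonpos.2 hay).trans (sub_nonneg.2 hzb)

theorem UnrestrictedWTP.exists_wtp_sub_eq {V : Set (Util A)} (hV : UnrestrictedWTP V)
    (d : A → ℝ) : ∃ v ∈ V, ∀ a b, wtp v a - wtp v b = d a - d b := by
  obtain ⟨m, hm⟩ := Finite.exists_min d
  obtain ⟨v, hv, hwtp⟩ :=
    hV (fun a => d a - d m) (fun a => sub_nonneg.2 (hm a)) ⟨m, sub_self _⟩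
  exact ⟨v, hv, fun a b => by rw [hwtp, hwtp, sub_sub_sub_cancel_right]⟩

theorem UnrestrictedWTP.exists_forall_sub_lt_wtp_sub {V : Set (Util A)}
    (hV : UnrestrictedWTP V) {p q : A → ℝ} {a b : A} (hab : a ≠ b)
    (hpq : p a - p b < q a - q b) :
    ∃ v ∈ V, (∀ c, c ≠ a → p a - p c < wtp v a - wtp v c) ∧
      ∀ c, c ≠ b → q b - q c < wtp v b - wtp v c := by
  classical
  obtain ⟨s, hps, hsq⟩ := exists_between hpq
  let low : A → ℝ := fun c => min (p c - p a) (q c - q b - s) - 1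
  obtain ⟨v, hv, hwtp⟩ :=
    hV.exists_wtp_sub_eq (Function.update (Function.update low a 0) b (-s))
  refine ⟨v, hv, fun c hca => ?_, fun c hcb => ?_⟩
  · rcases eq_or_ne c b with rfl | hcb
    · simpa [hwtp, hab] using hps
    · have hlow : low c < p c - p a :=
        (sub_one_lt _).trans_le (min_le_left _ _)
      simp only [hwtp, ne_eq, hab, hca, hcb, not_false_eq_true, Function.update_of_ne,
        Function.update_self]
      linarith
  · rcases eq_or_ne c a with rfl | hca
    · simp only [hwtp, ne_eq, hab, not_false_eq_true, Function.update_of_ne,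
        Function.update_self]
      linarith
    · have hlow : low c < q c - q b - s :=
        (sub_one_lt _).trans_le (min_le_right _ _)
      simp only [hwtp, ne_eq, hca, hcb, not_false_eq_true, Function.update_of_ne,
        Function.update_self]
      linarith

end Types

section Mechanism

variable [Fintype A] [Nonempty A]

/-- Weak monotonicity (W-Mon) of a choice rule, with the willingness to pay in the role of the
quasilinear valuation: an agent whose report changes the selected alternative does not thereby lower
her willingness to pay for the new alternative relative to the old one. -/
def WeaklyMonotone [DecidableEq I] (U : I → Set (Util A)) (x : (I → Util A) → A) : Prop :=
  ∀ u : I → Util A, (∀ j, u j ∈ U j) → ∀ i, ∀ v ∈ U i,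
    wtp v (x u) - wtp v (x (Function.update u i v)) ≤
      wtp (u i) (x u) - wtp (u i) (x (Function.update u i v))

/-- Positive association of differences (PAD) in willingness to pay: the selected alternative stays
selected when its lead over every other alternative grows strictly for every agent. -/
def PositiveAssociation (U : I → Set (Util A)) (x : (I → Util A) → A) : Prop :=
  ∀ u v : I → Util A, (∀ j, u j ∈ U j) → (∀ j, v j ∈ U j) →
    (∀ i b, b ≠ x u → wtp (u i) (x u) - wtp (u i) b < wtp (v i) (x u) - wtp (v i) b) →
      x v = x u

variable {U : I → Set (Util A)} {x : (I → Util A) → A} {t : (I → Util A) → I → ℝ}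

theorem DSIC.weaklyMonotone [DecidableEq I] (hDSIC : DSIC U x t)
    (hpar : ∀ i, ∀ u ∈ U i, IsParallel u) (hIR : IR U x t) (hNS : NoSubsidy U t) :
    WeaklyMonotone U x := by
  intro u hu i v hv
  have mem_update : ∀ {p : I → Util A} {w : Util A}, (∀ j, p j ∈ U j) → w ∈ U i →
      ∀ j, Function.update p i w j ∈ U j := fun {p _} hp hw =>
    (Function.forall_update_iff p fun j w' => w' ∈ U j).2 ⟨hw, fun j _ => hp j⟩
  have quasilinear : ∀ {p : I → Util A} {w : Util A}, (∀ j, p j ∈ U j) → w ∈ U i →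
      wtp w (x p) - t p i ≤
        wtp w (x (Function.update p i w)) - t (Function.update p i w) i := fun {p w} hp hw =>
    (hpar i w hw).wtp_sub_le_wtp_sub (hNS p hp i) (hNS _ (mem_update hp hw) i)
      (hIR p hp i w hw) (hDSIC p hp i w hw)
  have hto := quasilinear hu hv
  have hback := quasilinear (mem_update hu hv) (hu i)
  rw [Function.update_idem, Function.update_eq_self] at hback
  linarith

theorem WeaklyMonotone.positiveAssociation [Finite I] [DecidableEq I]
    (hx : WeaklyMonotone U x) : PositiveAssociation U x := by
  intro u v hu hv hlead
  cases nonempty_fintype I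
  have switch : ∀ s : Finset I, x (s.piecewise v u) = x u := by
    intro s
    induction s using Finset.induction_on with
    | empty => rw [Finset.piecewise_empty]
    | insert i s hi ih =>
      have hmem : ∀ j, s.piecewise v u j ∈ U j := fun j =>
        s.piecewise_cases v u (· ∈ U j) (hv j) (hu j)
      have hmono := hx _ hmem i (v i) (hv i)
      rw [ih, Finset.piecewise_eq_of_notMem s v u hi, ← Finset.piecewise_insert] at hmono
      by_contra hne
      exact (hlead i _ hne).not_ge hmono
  simpa only [Finset.piecewise_univ] using switch Finset.univ

theorem PositiveAssociation.choice_ne (hx : PositiveAssociation U x)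
    (hunr : ∀ i, UnrestrictedWTP (U i)) {u v : I → Util A} (hu : ∀ j, u j ∈ U j)
    (hv : ∀ j, v j ∈ U j) {b : A} (hb : b ≠ x u)
    (hlead : ∀ i, wtp (u i) (x u) - wtp (u i) b < wtp (v i) (x u) - wtp (v i) b) :
    x v ≠ b := by
  rintro rfl
  -- A profile between `u` and `v` at which positive association forces both `x u` and `x v`.
  choose w hw hwu hwv using fun i => (hunr i).exists_forall_sub_lt_wtp_sub hb.symm (hlead i)
  exact hb ((hx v w hv hw hwv).symm.trans (hx u w hu hw hwu))

theorem Lset_claim_three_general (hunr : ∀ i, UnrestrictedWTP (U i))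
    (hx : PositiveAssociation U x) {a b c : A} (hab : a ≠ b) (hbc : b ≠ c) (hac : a ≠ c)
    {α β γ : I → ℝ} (hα : α ∈ Lset U x a b) (hβ : β ∈ Lset U x b c)
    (hγ : ∀ i, α i + β i < γ i) : γ ∈ Lset U x a c := by
  classical
  obtain ⟨u, hu, huα, rfl⟩ := hα
  obtain ⟨v, hv, hvβ, rfl⟩ := hβ
  choose δ hαδ hδβ using fun i => exists_between (lt_sub_iff_add_lt.2 (hγ i))
  -- Relative to `u`, raise `a` until it leads `b` by `δ`, then move `c` to trail `a` by `γ`.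
  let d : I → A → ℝ := fun i =>
    Function.update (Function.update (wtp (u i)) (x u) (wtp (u i) (x v) + δ i))
      c (wtp (u i) (x v) + δ i - γ i)
  choose w hw hwd using fun i => (hunr i).exists_wtp_sub_eq (d i)
  have hwac : ∀ i, wtp (w i) (x u) - wtp (w i) c = γ i := fun i => by
    simp [hwd, d, hac]
  have hc : x w ≠ c := hx.choice_ne hunr hv hw hbc.symm fun i => by
    simp only [hwd, hvβ, d, ne_eq, hab.symm, hbc, not_false_eq_true, Function.update_of_ne,
      Function.update_self]
    linarith [hδβ i]
  refine ⟨w, hw, hwac, not_not.1 fun ha => ?_⟩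
  refine hx.choice_ne hunr hu hw ha (fun i => ?_) rfl
  simp only [hwd, d, ne_eq, ha, hc, hac, not_false_eq_true, Function.update_of_ne,
    Function.update_self]
  linarith [hαδ i, huα i]

end Mechanism

/-- "Transitivity" of the sets `L(a,b)` for a DSIC, deterministic,
onto, IR, no-subsidy mechanism on an unrestricted parallel utility domain, `|A| ≥ 3`. -/
theorem Lset_claim_three
    [Fintype A] [Nonempty A] [Fintype I] [DecidableEq I]
    (hA : 3 ≤ Fintype.card A)
    (U : I → Set (Util A))
    (hpar : ∀ i, ∀ u ∈ U i, IsParallel u)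
    (hunr : ∀ i, UnrestrictedWTP (U i))
    (x : (I → Util A) → A) (t : (I → Util A) → I → ℝ)
    (hDSIC : DSIC U x t) (hOnto : OntoMech U x)
    (hIR : IR U x t) (hNS : NoSubsidy U t) :
    ∀ a b c : A, a ≠ b → b ≠ c → a ≠ c →
    ∀ α β εα εβ : I → ℝ, (∀ i, 0 < εα i) → (∀ i, 0 < εβ i) →
      α - εα ∈ Lset U x a b → β - εβ ∈ Lset U x b c →
      (fun i => α i + β i - (εα i + εβ i) / 2) ∈ Lset U x a c := by
  intro a b c hab hbc hac α β εα εβ hεα hεβ hα hβ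
  exact Lset_claim_three_general hunr (hDSIC.weaklyMonotone hpar hIR hNS).positiveAssociation
    hab hbc hac hα hβ fun i => by simp only [Pi.sub_apply]; linarith [hεα i, hεβ i]

end NQLSC
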